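/- arXiv:1901.07503 — 5 statements merged into one kernel-verified Lean document; each statement's English description precedes it below -/
import Mathlib

section
/- Let (X, Σ) be an implicational base with closure operator φ, let B⁺ and B⁻ be dual antichains of closed sets in the lattice L(Σ), and let H = {X \ B : B ∈ B⁺} be the complementary hypergraph of B⁺. Then for every transversal T of H there exists a set I ∈ B⁻ such that I ⊆ φ(T). In particular this holds for every minimal transversal of H. -/
/-- A set `C` is closed w.r.t. the implicational base `Sig`:
for every implication `(A, b) ∈ Sig`, if `A ⊆ C` then `b ∈ C`. -/
def ImpClosed {α : Type*} (Sig : Finset (Finset α × α)) (C : Set α) : Prop :=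
  ∀ p ∈ Sig, (p.1 : Set α) ⊆ C → p.2 ∈ C

/-- `phi` is the closure operator of the implicational base `Sig`:
`phi S` is the smallest closed set containing `S`. -/
def IsClosureOperator {α : Type*} (Sig : Finset (Finset α × α)) (phi : Set α → Set α) : Prop :=
  ∀ S : Set α, S ⊆ phi S ∧ ImpClosed Sig (phi S) ∧
    ∀ C : Set α, ImpClosed Sig C → S ⊆ C → phi S ⊆ C

/-- `T` is a transversal of the hypergraph `H`. -/
def IsTransversal {α : Type*} (H : Set (Set α)) (T : Set α) : Prop :=
  ∀ E ∈ H, (T ∩ E).Nonempty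

/-- `T` is an inclusion-minimal transversal of `H`. -/
def IsMinTransversal {α : Type*} (H : Set (Set α)) (T : Set α) : Prop :=
  IsTransversal H T ∧ ∀ T' : Set α, IsTransversal H T' → T' ⊆ T → T' = T

/-- The antichains `Bp` and `Bm` of closed sets are dual in the lattice of
closed sets of `Sig`: every closed set satisfies exactly one of the two conditions. -/
def AreDual {α : Type*} (Sig : Finset (Finset α × α)) (Bp Bm : Set (Set α)) : Prop :=
  ∀ C : Set α, ImpClosed Sig C → Xor' (∃ B ∈ Bp, C ⊆ B) (∃ I ∈ Bm, I ⊆ C)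

theorem isTransversal_image_compl_iff {α : Type*} {Bp : Set (Set α)} {T : Set α} :
    IsTransversal (compl '' Bp) T ↔ ∀ B ∈ Bp, ¬T ⊆ B := by
  simp only [IsTransversal, Set.forall_mem_image, Set.inter_compl_nonempty_iff]

theorem AreDual.exists_subset_of_forall_not_subset {α : Type*} {Sig : Finset (Finset α × α)}
    {Bp Bm : Set (Set α)} (hdual : AreDual Sig Bp Bm) {C : Set α} (hC : ImpClosed Sig C)
    (hCB : ∀ B ∈ Bp, ¬C ⊆ B) : ∃ I ∈ Bm, I ⊆ C :=
  (Xor.or (hdual C hC)).resolve_left fun ⟨B, hB, hsub⟩ => hCB B hB hsub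

theorem stmt_0_general {α : Type*} {Sig : Finset (Finset α × α)} {phi : Set α → Set α}
    (hphi : IsClosureOperator Sig phi) {Bp Bm : Set (Set α)} (hdual : AreDual Sig Bp Bm)
    {T : Set α} (hT : IsTransversal (compl '' Bp) T) : ∃ I ∈ Bm, I ⊆ phi T := by
  obtain ⟨subset_phi, phi_closed, -⟩ := hphi T
  have not_subset : ∀ B ∈ Bp, ¬T ⊆ B := isTransversal_image_compl_iff.mp hT
  exact hdual.exists_subset_of_forall_not_subset phi_closed fun B hB hsub =>
    not_subset B hB (subset_phi.trans hsub)

theorem stmt_0 {α : Type*} [DecidableEq α] [Fintype α]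
    (Sig : Finset (Finset α × α)) (phi : Set α → Set α)
    (hphi : IsClosureOperator Sig phi) (Bp Bm : Set (Set α))
    (hBpClosed : ∀ B ∈ Bp, ImpClosed Sig B) (hBmClosed : ∀ I ∈ Bm, ImpClosed Sig I)
    (hBpAC : IsAntichain (· ⊆ ·) Bp) (hBmAC : IsAntichain (· ⊆ ·) Bm)
    (hdual : AreDual Sig Bp Bm)
    (H : Set (Set α)) (hH : H = (fun B => Bᶜ) '' Bp) :
    (∀ T : Set α, IsTransversal H T → ∃ I ∈ Bm, I ⊆ phi T) ∧
    (∀ T : Set α, IsMinTransversal H T → ∃ I ∈ Bm, I ⊆ phi T) := by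
  subst hH
  exact ⟨fun _ => stmt_0_general hphi hdual, fun _ hT => stmt_0_general hphi hdual hT.1⟩
end

section
/- Let (X, Σ) be an implicational base with closure operator φ, let B⁺ be an antichain of closed sets, and let H = {X \ B : B ∈ B⁺} be its complementary hypergraph. If T is a transversal of H, then every minimal generating set T* of T (i.e., T* ⊆ T with T ⊆ φ(T*) and T ⊈ φ(T* \ {x}) for all x ∈ T*) is also a transversal of H. In particular, every minimal transversal of H is independent with respect to φ. -/
/-- `T` is independent w.r.t. the closure operator `phi`. -/
def IsIndependent {α : Type*} (phi : Set α → Set α) (T : Set α) : Prop :=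
  ∀ x ∈ T, x ∉ phi (T \ {x})

/-- `T` is a generating set of `I` w.r.t. `phi`. -/
def IsGeneratingSet {α : Type*} (phi : Set α → Set α) (I T : Set α) : Prop :=
  T ⊆ I ∧ I ⊆ phi T

/-- `T` is a minimal generating set of `I` w.r.t. `phi`. -/
def IsMinGeneratingSet {α : Type*} (phi : Set α → Set α) (I T : Set α) : Prop :=
  IsGeneratingSet phi I T ∧ ∀ x ∈ T, ¬ I ⊆ phi (T \ {x})

/-!
A set meets every edge of `H` exactly when it is contained in no complement of an edge. If these
complements are closed, then a set and its closure are contained in the same ones, so that being a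
transversal depends only on the closure. Finally, if `x ∈ φ (T \ {x})`, then `T \ {x}` generates
`T`, so that a minimal transversal cannot contain such an `x`.
-/

/-- The operator of an implicational base as a bundled closure operator on `Set α`, whose closed
sets are by construction those of the base. -/
def IsClosureOperator.toClosureOperator {α : Type*} {Sig : Finset (Finset α × α)}
    {phi : Set α → Set α} (hphi : IsClosureOperator Sig phi) : ClosureOperator (Set α) :=
  .ofPred phi (ImpClosed Sig) (fun S => (hphi S).1) (fun S => (hphi S).2.1)
    fun S C hSC hC => (hphi S).2.2 C hC hSC

section Transversal

variable {α : Type*} {H : Set (Set α)} {T T' : Set α}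

theorem isTransversal_iff_forall_not_subset_compl :
    IsTransversal H T ↔ ∀ E ∈ H, ¬ T ⊆ Eᶜ := by
  simp only [IsTransversal, Set.subset_compl_iff_disjoint_right,
    Set.not_disjoint_iff_nonempty_inter]

theorem IsTransversal.mono (hT : IsTransversal H T) (hTT' : T ⊆ T') : IsTransversal H T' :=
  fun E hE => (hT E hE).mono (Set.inter_subset_inter_left E hTT')

variable {c : ClosureOperator (Set α)}

theorem isTransversal_closure_iff (hH : ∀ E ∈ H, c.IsClosed Eᶜ) :
    IsTransversal H (c T) ↔ IsTransversal H T := by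
  simp only [isTransversal_iff_forall_not_subset_compl]
  exact forall₂_congr fun E hE => not_congr (hH E hE).closure_le_iff

theorem IsGeneratingSet.isTransversal (hT' : IsGeneratingSet c T T')
    (hH : ∀ E ∈ H, c.IsClosed Eᶜ) (hT : IsTransversal H T) : IsTransversal H T' :=
  (isTransversal_closure_iff hH).1 (hT.mono hT'.2)

theorem isGeneratingSet_sdiff_singleton {x : α} (hx : x ∈ c (T \ {x})) :
    IsGeneratingSet c T (T \ {x}) := by
  refine ⟨Set.sdiff_subset, ?_⟩
  calc
    T ⊆ insert x (T \ {x}) := Set.subset_insert_sdiff_singleton x T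
    _ ⊆ c (T \ {x}) := Set.insert_subset hx (c.le_closure _)

theorem IsMinTransversal.isIndependent (hT : IsMinTransversal H T)
    (hH : ∀ E ∈ H, c.IsClosed Eᶜ) : IsIndependent c T := by
  intro x hxT hx
  have hTx : IsTransversal H (T \ {x}) :=
    (isGeneratingSet_sdiff_singleton hx).isTransversal hH hT.1
  exact (Set.sdiff_singleton_ssubset.2 hxT).ne (hT.2 _ hTx Set.sdiff_subset)

end Transversal

theorem stmt_1_general {α : Type*} (c : ClosureOperator (Set α)) (H : Set (Set α))
    (hH : ∀ E ∈ H, c.IsClosed Eᶜ) :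
    (∀ T T' : Set α, IsTransversal H T → IsGeneratingSet c T T' → IsTransversal H T') ∧
    (∀ T : Set α, IsMinTransversal H T → IsIndependent c T) :=
  ⟨fun _ _ hT hT' => hT'.isTransversal hH hT, fun _ hT => hT.isIndependent hH⟩

theorem stmt_1 {α : Type*} [DecidableEq α] [Fintype α]
    (Sig : Finset (Finset α × α)) (phi : Set α → Set α)
    (hphi : IsClosureOperator Sig phi) (Bp : Set (Set α))
    (hBpClosed : ∀ B ∈ Bp, ImpClosed Sig B)
    (hBpAC : IsAntichain (· ⊆ ·) Bp)
    (H : Set (Set α)) (hH : H = (fun B => Bᶜ) '' Bp) :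
    (∀ T T' : Set α, IsTransversal H T → IsMinGeneratingSet phi T T' → IsTransversal H T') ∧
    (∀ T : Set α, IsMinTransversal H T → IsIndependent phi T) := by
  have hHclosed : ∀ E ∈ H, hphi.toClosureOperator.IsClosed Eᶜ := by
    rw [hH, Set.forall_mem_image]
    exact fun B hB => (compl_compl B).symm ▸ hBpClosed B hB
  obtain ⟨hgen, hindep⟩ := stmt_1_general hphi.toClosureOperator H hHclosed
  exact ⟨fun T T' hT hT' => hgen T T' hT hT'.1, hindep⟩
end

section
/- Let (X, Σ) be an implicational base with closure operator φ and let I ⊆ X. Suppose T₁ and T₂ are minimal covering sets of I, and D ⊆ Σ is a set of implications such that: every premise of an implication of D is contained in T₁ ∩ T₂; T₁ \ I = T₂ \ I; and I ⊆ Tᵢ ∪ {b : (A → b) ∈ D} for both i = 1 and i = 2. Then T₁ = T₂. -/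
/-- `T` is a minimal covering set of `I` w.r.t. `phi`. -/
def IsMinCoveringSet {α : Type*} (phi : Set α → Set α) (I T : Set α) : Prop :=
  I ⊆ phi T ∧ ∀ x ∈ T, ¬ I ⊆ phi (T \ {x})

/-!
If `S ⊆ T ⊆ φ(S)`, then `φ(S) = φ(T)`, so a minimal covering set `T` equals `S`. Take
`S = T₁ ∩ T₂`: its closure contains the conclusions of `D`, hence every element of `I` that is
missing from `T₁` or from `T₂`. As `T₁` and `T₂` agree outside `I`, both lie in `φ(T₁ ∩ T₂)`.
-/

open Set

namespace IsClosureOperator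

variable {α : Type*} {Sig D : Finset (Finset α × α)} {phi : Set α → Set α}

/-- The bundled closure operator of an implicational base. Its underlying function is `phi`
definitionally, and its closed sets are those of the base. -/
def closureOperator (hphi : IsClosureOperator Sig phi) : ClosureOperator (Set α) :=
  .ofPred phi (ImpClosed Sig) (fun S ↦ (hphi S).1) (fun S ↦ (hphi S).2.1)
    (fun S C hSC hC ↦ (hphi S).2.2 C hC hSC)

theorem conclusions_subset (hphi : IsClosureOperator Sig phi) (hD : D ⊆ Sig) {S : Set α}
    (hprem : ∀ p ∈ D, (p.1 : Set α) ⊆ S) : {b : α | ∃ A : Finset α, (A, b) ∈ D} ⊆ phi S := by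
  rintro b ⟨A, hA⟩
  exact (hphi S).2.1 (A, b) (hD hA) ((hprem _ hA).trans (hphi S).1)

end IsClosureOperator

theorem isMinCoveringSet_iff_minimal {α : Type*} {phi : Set α → Set α} (hphi : Monotone phi)
    {I T : Set α} : IsMinCoveringSet phi I T ↔ Minimal (I ⊆ phi ·) T :=
  (minimal_iff_forall_sdiff_singleton (P := (I ⊆ phi ·))
    fun _ _ hcov hsub ↦ hcov.trans (hphi hsub)).symm

namespace IsMinCoveringSet

variable {α : Type*} {c : ClosureOperator (Set α)} {I S T T₁ T₂ : Set α}

theorem eq_of_subset_of_subset_closure (hT : IsMinCoveringSet c I T) (hST : S ⊆ T)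
    (hTS : T ⊆ c S) : S = T :=
  have hS : I ⊆ c S := hT.1.trans (c.le_closure_iff.1 hTS)
  ((isMinCoveringSet_iff_minimal c.monotone).1 hT).eq_of_subset hS hST

theorem subset_of_sdiff_subset (h₁ : IsMinCoveringSet c I T₁) (hdiff : T₁ \ I ⊆ T₂)
    (hcov : I ⊆ T₂ ∪ c (T₁ ∩ T₂)) : T₁ ⊆ T₂ := by
  have hclosure : T₁ ⊆ c (T₁ ∩ T₂) := by
    intro x hx₁
    by_cases hx₂ : x ∈ T₂
    · exact c.le_closure _ ⟨hx₁, hx₂⟩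
    · have hxI : x ∈ I := by_contra fun hxI ↦ hx₂ (hdiff ⟨hx₁, hxI⟩)
      exact (hcov hxI).resolve_left hx₂
  exact inter_eq_left.1 (h₁.eq_of_subset_of_subset_closure inter_subset_left hclosure)

end IsMinCoveringSet

theorem stmt_9_general {α : Type*} {c : ClosureOperator (Set α)} {I T₁ T₂ : Set α}
    (h₁ : IsMinCoveringSet c I T₁) (h₂ : IsMinCoveringSet c I T₂) (hdiff : T₁ \ I = T₂ \ I)
    (hcov₁ : I ⊆ T₁ ∪ c (T₁ ∩ T₂)) (hcov₂ : I ⊆ T₂ ∪ c (T₁ ∩ T₂)) : T₁ = T₂ :=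
  (h₁.subset_of_sdiff_subset (hdiff.subset.trans sdiff_subset) hcov₂).antisymm
    (h₂.subset_of_sdiff_subset (hdiff.superset.trans sdiff_subset) (inter_comm T₁ T₂ ▸ hcov₁))

theorem stmt_9 {α : Type*} [DecidableEq α] [Fintype α]
    (Sig : Finset (Finset α × α)) (phi : Set α → Set α)
    (hphi : IsClosureOperator Sig phi)
    (I T₁ T₂ : Set α)
    (h₁ : IsMinCoveringSet phi I T₁) (h₂ : IsMinCoveringSet phi I T₂)
    (D : Finset (Finset α × α)) (hD : D ⊆ Sig)
    (hprem : ∀ p ∈ D, (p.1 : Set α) ⊆ T₁ ∩ T₂)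
    (hdiff : T₁ \ I = T₂ \ I)
    (hcov₁ : I ⊆ T₁ ∪ {b : α | ∃ A : Finset α, (A, b) ∈ D})
    (hcov₂ : I ⊆ T₂ ∪ {b : α | ∃ A : Finset α, (A, b) ∈ D}) :
    T₁ = T₂ := by
  have hD_sub := hphi.conclusions_subset hD hprem
  exact stmt_9_general (c := hphi.closureOperator) h₁ h₂ hdiff
    (hcov₁.trans (union_subset_union_right T₁ hD_sub))
    (hcov₂.trans (union_subset_union_right T₂ hD_sub))
end

section
/- In the construction from the one-in-three 3SAT reduction: if T is a one-in-three truth assignment of φ, then T is closed in Σ, T ⊈ B_j for every j ∈ {1,…,m}, and F ⊈ T. Consequently T is a closed set witnessing that the antichains {B₁,…,B_m} and {F} are not dual in the lattice of closed sets of Σ. -/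
/-- The ground set of the reduction: `n` variable elements, `m` clause elements
`y₁, …, y_m`, and a special element `z`. -/
abbrev RedV (n m : ℕ) := Fin n ⊕ Fin m ⊕ Unit

/-- The variable element `xᵥ`. -/
def xv {n m : ℕ} (v : Fin n) : RedV n m := Sum.inl v

/-- The clause element `y_j`. -/
def yv {n m : ℕ} (j : Fin m) : RedV n m := Sum.inr (Sum.inl j)

/-- The special element `z`. -/
def zv {n m : ℕ} : RedV n m := Sum.inr (Sum.inr ())

/-- `C` is closed in the implicational base `Σ` of the reduction. -/
def RedClosed {n m : ℕ} (c : Fin m → Fin 3 → Fin n) (C : Set (RedV n m)) : Prop :=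
  (∀ (j : Fin m) (i₁ i₂ : Fin 3), i₁ ≠ i₂ →
      xv (c j i₁) ∈ C → xv (c j i₂) ∈ C → zv ∈ C) ∧
  (∀ (j : Fin m) (i : Fin 3), zv ∈ C → xv (c j i) ∈ C → yv j ∈ C) ∧
  (∀ j : Fin m, yv j ∈ C → zv ∈ C)

/-- The set `B_j = X \ ({y_j} ∪ C_j)`. -/
def RedB {n m : ℕ} (c : Fin m → Fin 3 → Fin n) (j : Fin m) : Set (RedV n m) :=
  ({yv j} ∪ Set.range (fun i : Fin 3 => xv (c j i)))ᶜ

/-- The set `F = {y₁, …, y_m, z}`. -/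
def RedF (n m : ℕ) : Set (RedV n m) :=
  Set.range (yv : Fin m → RedV n m) ∪ {zv}

/-- The antichains `B⁺ = {B₁, …, B_m}` and `B⁻ = {F}` are dual in the lattice of
closed sets: every closed set satisfies exactly one of the two conditions. -/
def RedDual {n m : ℕ} (c : Fin m → Fin 3 → Fin n) : Prop :=
  ∀ C : Set (RedV n m), RedClosed c C →
    Xor' (∃ j : Fin m, C ⊆ RedB c j) (RedF n m ⊆ C)

/-!
If `z ∉ C`, every implication of `Σ` with `z` in its premise holds vacuously, so `C` is closed
exactly when it contains no `y_j` and at most one variable of each clause. A set of variables lies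
outside every `B_j` exactly when it meets each clause. Uniqueness of the true variable of a clause
thus gives closedness, its existence avoids every `B_j`, and `z ∈ F` prevents `F` from being
contained in a set of variables.
-/

section Reduction

variable {n m : ℕ} {c : Fin m → Fin 3 → Fin n} {C : Set (RedV n m)} {T : Set (Fin n)}

lemma xv_injective : Function.Injective (xv : Fin n → RedV n m) :=
  Sum.inl_injective

lemma xv_mem_image_xv_iff {v : Fin n} : (xv v : RedV n m) ∈ xv '' T ↔ v ∈ T :=
  xv_injective.mem_set_image

lemma yv_notMem_image_xv (j : Fin m) : (yv j : RedV n m) ∉ xv '' T := by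
  simp [xv, yv]

lemma zv_notMem_image_xv : (zv : RedV n m) ∉ xv '' T := by
  simp [xv, zv]

lemma redClosed_iff_of_zv_notMem (hz : zv ∉ C) :
    RedClosed c C ↔ (∀ j, {i | xv (c j i) ∈ C}.Subsingleton) ∧ ∀ j, yv j ∉ C := by
  constructor
  · rintro ⟨pair_imp_z, -, y_imp_z⟩
    refine ⟨fun j i₁ h₁ i₂ h₂ => ?_, fun j hy => hz (y_imp_z j hy)⟩
    by_contra hne
    exact hz (pair_imp_z j i₁ i₂ hne h₁ h₂)
  · rintro ⟨at_most_one, no_y⟩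
    exact ⟨fun j _ _ hne h₁ h₂ => absurd (at_most_one j h₁ h₂) hne,
      fun _ _ hz' _ => absurd hz' hz, fun j hy => absurd hy (no_y j)⟩

lemma redClosed_image_xv_iff :
    RedClosed c (xv '' T) ↔ ∀ j, {i | c j i ∈ T}.Subsingleton := by
  simp only [redClosed_iff_of_zv_notMem zv_notMem_image_xv, xv_mem_image_xv_iff,
    yv_notMem_image_xv, not_false_eq_true, implies_true, and_true]

lemma not_subset_redB_iff {j : Fin m} :
    ¬ C ⊆ RedB c j ↔ yv j ∈ C ∨ ∃ i, xv (c j i) ∈ C := by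
  rw [RedB, Set.subset_compl_iff_disjoint_left, Set.not_disjoint_iff]
  simp only [Set.singleton_union, Set.mem_insert_iff, Set.mem_range, or_and_right, exists_or,
    exists_eq_left, exists_exists_eq_and]

lemma not_image_xv_subset_redB_iff {j : Fin m} :
    ¬ xv '' T ⊆ RedB c j ↔ ∃ i, c j i ∈ T := by
  simp only [not_subset_redB_iff, yv_notMem_image_xv, xv_mem_image_xv_iff, false_or]

lemma zv_mem_redF : zv ∈ RedF n m :=
  Or.inr rfl

lemma not_redF_subset_image_xv : ¬ RedF n m ⊆ xv '' T :=
  fun hF => zv_notMem_image_xv (hF zv_mem_redF)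

lemma RedClosed.not_redDual (hC : RedClosed c C) (hB : ∀ j, ¬ C ⊆ RedB c j)
    (hF : ¬ RedF n m ⊆ C) : ¬ RedDual c :=
  fun hdual => (Xor.or (hdual C hC)).elim (fun ⟨j, hj⟩ => hB j hj) hF

end Reduction

theorem stmt_11 (n m : ℕ) (c : Fin m → Fin 3 → Fin n)
    (hdist : ∀ j : Fin m, Function.Injective (c j))
    (hvar : ∀ v : Fin n, ∃ (j : Fin m) (i : Fin 3), c j i = v)
    (T : Set (Fin n)) (hT : ∀ j : Fin m, ∃! i : Fin 3, c j i ∈ T) :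
    RedClosed c (xv '' T) ∧
    (∀ j : Fin m, ¬ xv '' T ⊆ RedB c j) ∧
    ¬ RedF n m ⊆ xv '' T ∧
    ¬ RedDual c := by
  have hclosed : RedClosed c (xv '' T) :=
    redClosed_image_xv_iff.2 fun j _ h₁ _ h₂ => (hT j).unique h₁ h₂
  have hB (j : Fin m) : ¬ xv '' T ⊆ RedB c j :=
    not_image_xv_subset_redB_iff.2 (hT j).exists
  have hF : ¬ RedF n m ⊆ xv '' T := not_redF_subset_image_xv
  exact ⟨hclosed, hB, hF, hclosed.not_redDual hB hF⟩
end

section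
/- Let (X, Σ) be an implicational base of dimension one (every premise is a singleton) with closure operator φ, and suppose the relation ⊑ defined by x ⊑ y iff x ∈ φ({y}) is antisymmetric, so that (X, ⊑) is a partial order (the underlying poset of Σ). If Σ has independent-width one, then the underlying poset contains no 2+2, i.e., there are no four elements a, b, c, d with b ⊑ a, b ≠ a, d ⊑ c, d ≠ c, such that each of a and b is ⊑-incomparable with each of c and d. In other words, the underlying poset of Σ is an interval order. -/
/-- A finite set `S` of implications is independent w.r.t. `phi`. -/
def IndepImps {α : Type*} [DecidableEq α] (phi : Set α → Set α)
    (S : Finset (Finset α × α)) : Prop :=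
  ∀ p ∈ S, p.2 ∉ phi (((S.erase p).biUnion Prod.fst : Finset α) : Set α)

/-- The independent-width of `Sig`: the maximum cardinality of an independent
subset of implications of `Sig`. -/
noncomputable def indepWidth {α : Type*} [DecidableEq α] (phi : Set α → Set α)
    (Sig : Finset (Finset α × α)) : ℕ :=
  sSup {n : ℕ | ∃ S ⊆ Sig, IndepImps phi S ∧ S.card = n}

/-!
If `b ∈ phi A` but `b ∉ A`, then `phi A \ {b}` contains `A` and hence is not closed, so some
implication of the base concludes `b` from a premise inside `phi A`. Given a family of such pairs
`(A i, b i)`, the implications chosen in this way form an independent set as soon as no `b i` lies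
in the closure of the union of the other `A j`. The two strict relations `b ⊑ a`, `d ⊑ c` of a
`2+2` are a family of size two of this kind.
-/

section Independence

variable {α : Type*} {Sig : Finset (Finset α × α)} {phi : Set α → Set α}

theorem IsClosureOperator.phi_subset_phi (hphi : IsClosureOperator Sig phi) {S T : Set α}
    (h : S ⊆ phi T) : phi S ⊆ phi T :=
  (hphi S).2.2 _ (hphi T).2.1 h

theorem IsClosureOperator.mono (hphi : IsClosureOperator Sig phi) : Monotone phi :=
  fun _ T h => hphi.phi_subset_phi (h.trans (hphi T).1)

theorem IsClosureOperator.exists_premise_subset (hphi : IsClosureOperator Sig phi)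
    {A : Set α} {b : α} (hb : b ∈ phi A \ A) :
    ∃ p ∈ Sig, p.2 = b ∧ (p.1 : Set α) ⊆ phi A := by
  by_contra! h
  have hclosed : ImpClosed Sig (phi A \ {b}) := fun p hp hpA =>
    have hpremise : (p.1 : Set α) ⊆ phi A := hpA.trans Set.sdiff_subset
    ⟨(hphi A).2.1 p hp hpremise, fun hpb => h p hp hpb hpremise⟩
  have hA : A ⊆ phi A \ {b} := Set.subset_sdiff_singleton (hphi A).1 hb.2
  exact ((hphi A).2.2 _ hclosed hA hb.1).2 rfl

variable [DecidableEq α]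

theorem IndepImps.card_le_indepWidth {S : Finset (Finset α × α)} (hS : IndepImps phi S)
    (hsub : S ⊆ Sig) : S.card ≤ indepWidth phi Sig := by
  refine le_csSup ⟨Sig.card, ?_⟩ ⟨S, hsub, hS, rfl⟩
  rintro _ ⟨T, hT, -, rfl⟩
  exact Finset.card_le_card hT

variable {ι : Type*} [Fintype ι]

theorem indepImps_image_of_monotone (hphi : Monotone phi)
    {p : ι → Finset α × α} (hp : ∀ i, (p i).2 ∉ phi (⋃ j ≠ i, ((p j).1 : Set α))) :
    IndepImps phi (Finset.univ.image p) := by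
  intro q hq
  obtain ⟨i, -, rfl⟩ := Finset.mem_image.mp hq
  refine fun hmem => hp i (hphi ?_ hmem)
  intro x hx
  obtain ⟨r, hr, hxr⟩ := Finset.mem_biUnion.mp (Finset.mem_coe.mp hx)
  obtain ⟨hne, hr⟩ := Finset.mem_erase.mp hr
  obtain ⟨j, -, rfl⟩ := Finset.mem_image.mp hr
  exact Set.mem_biUnion (fun hji : j = i => hne (congrArg p hji)) hxr

theorem IsClosureOperator.card_le_indepWidth (hphi : IsClosureOperator Sig phi)
    {A : ι → Set α} {b : ι → α} (hb : ∀ i, b i ∈ phi (A i) \ A i)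
    (hindep : ∀ i, b i ∉ phi (⋃ j ≠ i, A j)) :
    Fintype.card ι ≤ indepWidth phi Sig := by
  choose p hpSig hpb hpA using fun i => hphi.exists_premise_subset (hb i)
  have hsub {i j : ι} (hji : j ≠ i) : phi (A j) ⊆ phi (⋃ k ≠ i, A k) :=
    hphi.mono (Set.subset_biUnion_of_mem (u := A) hji)
  have hinj : Function.Injective p := by
    intro i j hij
    by_contra hne
    have hbij : b i = b j := by rw [← hpb i, hij, hpb j]
    exact hindep i (hsub (Ne.symm hne) (hbij ▸ (hb j).1))
  have hpIndep : IndepImps phi (Finset.univ.image p) :=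
    indepImps_image_of_monotone hphi.mono fun i hmem =>
      hindep i (hphi.phi_subset_phi (Set.iUnion₂_subset fun j hji => (hpA j).trans (hsub hji))
        (hpb i ▸ hmem))
  calc
    Fintype.card ι = (Finset.univ.image p).card := (Finset.card_image_of_injective _ hinj).symm
    _ ≤ indepWidth phi Sig :=
      hpIndep.card_le_indepWidth (Finset.image_subset_iff.mpr fun i _ => hpSig i)

end Independence

theorem stmt_14_general {α : Type*} [DecidableEq α]
    {Sig : Finset (Finset α × α)} {phi : Set α → Set α}
    (hphi : IsClosureOperator Sig phi) (hwidth : indepWidth phi Sig ≤ 1)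
    {A C : Set α} {b d : α} (hb : b ∈ phi A \ A) (hd : d ∈ phi C \ C) :
    b ∈ phi C ∨ d ∈ phi A := by
  by_contra! ⟨hbC, hdA⟩
  have hothers₀ : ⋃ j ≠ (0 : Fin 2), ![A, C] j = C := by ext; simp [Fin.exists_fin_two]
  have hothers₁ : ⋃ j ≠ (1 : Fin 2), ![A, C] j = A := by ext; simp [Fin.exists_fin_two]
  have htwo : Fintype.card (Fin 2) ≤ indepWidth phi Sig :=
    hphi.card_le_indepWidth (A := ![A, C]) (b := ![b, d])
      (Fin.forall_fin_two.mpr ⟨hb, hd⟩)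
      (Fin.forall_fin_two.mpr ⟨by rwa [hothers₀], by rwa [hothers₁]⟩)
  rw [Fintype.card_fin] at htwo
  lia

/-- In the underlying poset `x ⊑ y ↔ x ∈ phi {y}` of an implicational base of
dimension one and independent-width one, there is no induced `2+2`,
i.e. the underlying poset is an interval order. -/
theorem stmt_14 {α : Type*} [DecidableEq α] [Fintype α]
    (Sig : Finset (Finset α × α)) (phi : Set α → Set α)
    (hphi : IsClosureOperator Sig phi)
    (hdim : ∀ p ∈ Sig, p.1.card = 1)
    (hantisymm : ∀ x y : α, x ∈ phi {y} → y ∈ phi {x} → x = y)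
    (hwidth : indepWidth phi Sig = 1) :
    ∀ a b c d : α, b ∈ phi {a} → b ≠ a → d ∈ phi {c} → d ≠ c →
      ¬ ((a ∉ phi {c} ∧ c ∉ phi {a}) ∧ (a ∉ phi {d} ∧ d ∉ phi {a}) ∧
         (b ∉ phi {c} ∧ c ∉ phi {b}) ∧ (b ∉ phi {d} ∧ d ∉ phi {b})) := by
  rintro a b c d hb hba hd hdc ⟨-, ⟨-, hda⟩, ⟨hbc, -⟩, -⟩
  exact (stmt_14_general hphi hwidth.le ⟨hb, hba⟩ ⟨hd, hdc⟩).elim hbc hda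
end
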